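/- Let k be an algebraically closed field of characteristic 2, let K be the fraction field of the polynomial ring k[u, v, w] in three variables, and let F be the intermediate field of K over k generated by the three elements u², v + uw, and w² + u. Then the field extension K/F is purely inseparable of degree 4, i.e., [K : F] = 4 and every element of K has its 4-th power in F. -/

import Mathlib

open MvPolynomial in
/-- A substitution `X i ↦ g i` into power series that is the identity modulo the power series
variable extends to the field of rational functions. -/
theorem exists_algHom_fractionRing_powerSeries {k σ : Type*} [Field k]
    (g : σ → PowerSeries (FractionRing (MvPolynomial σ k)))
    (hg : ∀ i, PowerSeries.constantCoeff (g i) =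
      algebraMap (MvPolynomial σ k) (FractionRing (MvPolynomial σ k)) (X i)) :
    ∃ φ : FractionRing (MvPolynomial σ k) →ₐ[k] PowerSeries (FractionRing (MvPolynomial σ k)),
      ∀ i, φ (algebraMap (MvPolynomial σ k) (FractionRing (MvPolynomial σ k)) (X i)) = g i := by
  have hcomp : PowerSeries.constantCoeff.comp (aeval (R := k) g).toRingHom =
      algebraMap (MvPolynomial σ k) (FractionRing (MvPolynomial σ k)) := by
    ext i
    · simp [PowerSeries.algebraMap_apply, IsScalarTower.algebraMap_apply k (MvPolynomial σ k)
        (FractionRing (MvPolynomial σ k)), MvPolynomial.algebraMap_eq]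
    · simp [hg]
  have hunit : ∀ y : nonZeroDivisors (MvPolynomial σ k), IsUnit (aeval (R := k) g y) := by
    intro y
    rw [PowerSeries.isUnit_iff_constantCoeff]
    have h := RingHom.congr_fun hcomp y
    simp only [RingHom.comp_apply, AlgHom.toRingHom_eq_coe, RingHom.coe_coe] at h
    rw [h]
    exact IsLocalization.map_units _ y
  exact ⟨IsLocalization.liftAlgHom hunit, fun i ↦ by simp⟩

/-- Algebra homomorphisms from a field that agree on a set agree on the subfield it generates. -/
theorem IntermediateField.eqOn_adjoin {k K S : Type*} [Field k] [Field K] [Algebra k K]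
    [CommRing S] [Algebra k S] {φ ψ : K →ₐ[k] S} {s : Set K} (h : Set.EqOn φ ψ s) :
    Set.EqOn φ ψ (IntermediateField.adjoin k s) := by
  intro x hx
  induction hx using IntermediateField.adjoin_induction with
  | mem x hx => exact h hx
  | algebraMap x => simp
  | add x y _ _ hx hy => simp [hx, hy]
  | mul x y _ _ hx hy => simp [hx, hy]
  | inv x _ hx =>
    rcases eq_or_ne x 0 with rfl | h0
    · simp
    · refine left_inv_eq_right_inv (a := φ x) ?_ ?_
      · rw [← map_mul, inv_mul_cancel₀ h0, map_one]
      · rw [hx, ← map_mul, mul_inv_cancel₀ h0, map_one]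

open MvPolynomial in
/-- A subfield of the field of rational functions that contains the constants and the variables
is everything. -/
theorem Subfield.eq_top_of_X_mem {k σ : Type*} [Field k]
    (L : Subfield (FractionRing (MvPolynomial σ k)))
    (hC : ∀ a : k, algebraMap k (FractionRing (MvPolynomial σ k)) a ∈ L)
    (hX : ∀ i, algebraMap (MvPolynomial σ k) (FractionRing (MvPolynomial σ k)) (X i) ∈ L) :
    L = ⊤ := by
  have hpoly : ∀ p, algebraMap (MvPolynomial σ k) (FractionRing (MvPolynomial σ k)) p ∈ L := by
    intro p
    induction p using MvPolynomial.induction_on with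
    | C a =>
      have := hC a
      rwa [IsScalarTower.algebraMap_apply k (MvPolynomial σ k)] at this
    | add p q hp hq => rw [map_add]; exact add_mem hp hq
    | mul_X p i hp => rw [map_mul]; exact mul_mem hp (hX i)
  refine eq_top_iff.2 fun x _ ↦ ?_
  obtain ⟨p, q, -, rfl⟩ := IsFractionRing.div_surjective (MvPolynomial σ k) x
  exact div_mem (hpoly p) (hpoly q)

open MvPolynomial in
/-- The substitution `u ↦ u + t²`, `v ↦ v + t² w + t u + t³`, `w ↦ w + t` fixes the generators
modulo `t⁴`, but not `w²`. -/
theorem X_sq_notMem_adjoin (k : Type*) [Field k] [CharP k 2] :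
    let K := FractionRing (MvPolynomial (Fin 3) k)
    let u : K := algebraMap (MvPolynomial (Fin 3) k) K (X 0)
    let v : K := algebraMap (MvPolynomial (Fin 3) k) K (X 1)
    let w : K := algebraMap (MvPolynomial (Fin 3) k) K (X 2)
    w ^ 2 ∉ IntermediateField.adjoin k {u ^ 2, v + u * w, w ^ 2 + u} := by
  intro K u v w hw
  let c : K →+* PowerSeries K := PowerSeries.C
  let t : PowerSeries K := PowerSeries.X
  have h2 : (2 : PowerSeries K) = 0 := by
    rw [← map_ofNat (algebraMap k (PowerSeries K)) 2, CharTwo.two_eq_zero, map_zero]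
  obtain ⟨φ, hφ⟩ := exists_algHom_fractionRing_powerSeries (k := k)
    ![c u + t ^ 2, c v + t ^ 2 * c w + t * c u + t ^ 3, c w + t]
    (by intro i; fin_cases i <;> simp [c, t, u, v, w, K])
  have hu : φ u = c u + t ^ 2 := hφ 0
  have hv : φ v = c v + t ^ 2 * c w + t * c u + t ^ 3 := hφ 1
  have hw' : φ w = c w + t := hφ 2
  let π := Ideal.Quotient.mkₐ k (Ideal.span {t ^ 4})
  let ι : K →ₐ[k] PowerSeries K := (Algebra.ofId K (PowerSeries K)).restrictScalars k
  have hι : ∀ x, ι x = c x := fun x ↦ rfl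
  have key : ∀ x y : PowerSeries K, π x = π y ↔ t ^ 4 ∣ x - y := fun x y ↦ by
    rw [← Ideal.mem_span_singleton]
    exact Ideal.Quotient.eq
  have heq : Set.EqOn (π.comp φ) (π.comp ι) {u ^ 2, v + u * w, w ^ 2 + u} := by
    rintro x (rfl | rfl | rfl) <;>
      rw [AlgHom.comp_apply, AlgHom.comp_apply, key, hι] <;>
      simp only [map_add, map_mul, map_pow, hu, hv, hw']
    · exact ⟨1, by linear_combination (c u * t ^ 2) * h2⟩
    · exact ⟨0, by linear_combination (t ^ 2 * c w + t * c u + t ^ 3) * h2⟩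
    · exact ⟨0, by linear_combination (c w * t + t ^ 2) * h2⟩
  have h := IntermediateField.eqOn_adjoin heq hw
  rw [AlgHom.comp_apply, AlgHom.comp_apply, key, hι, map_pow, map_pow, hw'] at h
  have h' : t ^ 4 ∣ t ^ 2 := by
    convert h using 1
    linear_combination -(c w * t) * h2
  have := PowerSeries.X_pow_dvd_iff.1 h' 2 (by norm_num)
  simp [t, PowerSeries.coeff_X_pow] at this

open MvPolynomial in
/-- Let `k` be an algebraically closed field of characteristic 2, `K = k(u, v, w)` a
rational function field in three variables, and `F = k(u², v + uw, w² + u)`. Then `K/F`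
is purely inseparable of degree 4: `[K : F] = 4` and every `x ∈ K` has `x⁴ ∈ F`. -/
theorem stmt9 (k : Type*) [Field k] [IsAlgClosed k] [CharP k 2] :
    let K := FractionRing (MvPolynomial (Fin 3) k)
    let u : K := algebraMap (MvPolynomial (Fin 3) k) K (X 0)
    let v : K := algebraMap (MvPolynomial (Fin 3) k) K (X 1)
    let w : K := algebraMap (MvPolynomial (Fin 3) k) K (X 2)
    let F : IntermediateField k K :=
      IntermediateField.adjoin k {u ^ 2, v + u * w, w ^ 2 + u}
    Module.finrank F K = 4 ∧ ∀ x : K, x ^ 4 ∈ F := by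
  intro K u v w F
  have hwF : w ^ 2 ∉ F := X_sq_notMem_adjoin k
  have : CharP K 2 := charP_of_injective_algebraMap (algebraMap k K).injective 2
  have : CharP F 2 := charP_of_injective_algebraMap (algebraMap k F).injective 2
  have h2 : (2 : K) = 0 := CharP.cast_eq_zero K 2
  have ha : u ^ 2 ∈ F := IntermediateField.subset_adjoin _ _ (by simp)
  have hb : v + u * w ∈ F := IntermediateField.subset_adjoin _ _ (by simp)
  have hc : w ^ 2 + u ∈ F := IntermediateField.subset_adjoin _ _ (by simp)
  have hu4 : u ^ 4 ∈ F := by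
    convert pow_mem ha 2 using 1
    ring
  have hw4 : w ^ 4 ∈ F := by
    convert add_mem (pow_mem hc 2) ha using 1
    linear_combination -(w ^ 2 * u + u ^ 2) * h2
  have hv4 : v ^ 4 ∈ F := by
    convert sub_mem (pow_mem hb 4) (mul_mem hu4 hw4) using 1
    linear_combination
      -(2 * v ^ 3 * (u * w) + 3 * v ^ 2 * (u * w) ^ 2 + 2 * v * (u * w) ^ 3) * h2
  have hpow : ∀ x : K, x ^ 4 ∈ F := by
    have htop := Subfield.eq_top_of_X_mem (F.toSubfield.comap (iterateFrobenius K 2 2))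
      (fun a ↦ pow_mem (F.algebraMap_mem a) _)
      (fun i ↦ by fin_cases i; exacts [hu4, hv4, hw4])
    intro x
    have hx : x ∈ F.toSubfield.comap (iterateFrobenius K 2 2) := htop ▸ Subfield.mem_top x
    exact hx
  refine ⟨?_, hpow⟩
  have : IsPurelyInseparable F K :=
    (isPurelyInseparable_iff_pow_mem F 2).2 fun x ↦ ⟨2, ⟨x ^ 4, hpow x⟩, rfl⟩
  have hgen : IntermediateField.adjoin F {w} = ⊤ := by
    have hF : ∀ x ∈ F, x ∈ IntermediateField.adjoin F {w} := fun x hx ↦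
      (IntermediateField.adjoin F {w}).algebraMap_mem ⟨x, hx⟩
    have hw : w ∈ IntermediateField.adjoin F {w} := IntermediateField.mem_adjoin_simple_self F w
    have hu : u ∈ IntermediateField.adjoin F {w} := by
      convert sub_mem (hF _ hc) (pow_mem hw 2) using 1
      ring
    have hv : v ∈ IntermediateField.adjoin F {w} := by
      convert sub_mem (hF _ hb) (mul_mem hu hw) using 1
      ring
    have htop := Subfield.eq_top_of_X_mem (IntermediateField.adjoin F {w}).toSubfield
      (fun a ↦ hF _ (F.algebraMap_mem a)) (fun i ↦ by fin_cases i; exacts [hu, hv, hw])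
    refine eq_top_iff.2 fun x _ ↦ ?_
    have hx : x ∈ (IntermediateField.adjoin F {w}).toSubfield := htop ▸ Subfield.mem_top x
    exact hx
  rw [← IntermediateField.finrank_top', ← hgen,
    IntermediateField.adjoin.finrank (Algebra.IsIntegral.isIntegral w),
    IsPurelyInseparable.minpoly_natDegree_eq' F 2]
  have hle : IsPurelyInseparable.elemExponent F w ≤ 2 :=
    IsPurelyInseparable.elemExponent_le_of_pow_mem' 2 ⟨⟨w ^ 4, hw4⟩, rfl⟩
  have hred : w ^ 2 ^ IsPurelyInseparable.elemExponent F w ∈ F := by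
    rw [← IsPurelyInseparable.algebraMap_elemReduct_eq' F 2 w]
    exact SetLike.coe_mem _
  interval_cases IsPurelyInseparable.elemExponent F w
  · exact absurd (pow_mem (by simpa using hred) 2) hwF
  · exact absurd (by simpa using hred) hwF
  · norm_num
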